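/- arXiv:1506.06253 — 4 statements merged into one kernel-verified Lean document; each statement's English description precedes it below -/
import Mathlib

section
/- Assume P does not lie on a median of ABC (a line joining a vertex to the midpoint of the opposite side). Then Q, D₀, λ(A) are collinear; Q, E₀, λ(B) are collinear; and Q, F₀, λ(C) are collinear. That is, Q is the perspector of the medial triangle D₀E₀F₀ and the triangle λ(A)λ(B)λ(C). -/
/-!
In homogeneous barycentric coordinates let `P = (x : y : z)` and `P' = (yz : zx : xy)`, so that
`Q = (x(y+z) : y(z+x) : z(x+y))`. The traces of `P` and `P'` on `BC` are `D = (0 : y : z)` and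
`D₃ = (0 : z : y)`. Inverting the matrix of traces gives `2x A = -(y+z) D + (z+x) E + (x+y) F`, and
the affine map `λ` carries this relation to `2x λ(A) = -(y+z) D₃ + (z+x) E₃ + (x+y) F₃`, whence
`λ(A) = (y+z : x-z : x-y)`. With `s = xy + yz + zx`, comparing coordinates yields
`x² λ(A) = s Q + (x² - s) D₀`, so `λ(A)` lies on the line `QD₀`. The statements for `B` and `C`
follow by cyclic permutation.
-/

noncomputable section

/-- The real affine plane. -/
abbrev Pt : Type := ℝ × ℝ

/-- `u` and `v` are parallel vectors (the zero vector is parallel to everything). -/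
def Par (u v : Pt) : Prop := ∃ t : ℝ, u = t • v ∨ v = t • u

/-- The centroid of the triangle `ABC`. -/
def cent (A B C : Pt) : Pt := (3⁻¹ : ℝ) • (A + B + C)

/-- The homothety with center `Z` and ratio `r`. -/
def homoth (Z : Pt) (r : ℝ) (X : Pt) : Pt := Z + r • (X - Z)

/-- The value at `p` of the quadratic polynomial with coefficient vector `c`. -/
def qval (c : Fin 6 → ℝ) (p : Pt) : ℝ :=
  c 0 * p.1 ^ 2 + c 1 * p.1 * p.2 + c 2 * p.2 ^ 2 + c 3 * p.1 + c 4 * p.2 + c 5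

/-- `S` is a conic: the zero locus of a real polynomial of total degree 2. -/
def IsConic (S : Set Pt) : Prop :=
  ∃ c : Fin 6 → ℝ, ¬(c 0 = 0 ∧ c 1 = 0 ∧ c 2 = 0) ∧ S = {p | qval c p = 0}

/-- `Z` is a center of symmetry of `S`. -/
def IsCenterOf (Z : Pt) (S : Set Pt) : Prop :=
  ∀ p ∈ S, (2 : ℝ) • Z - p ∈ S

/-- The gradient at `p` of the quadratic polynomial with coefficients `c`. -/
def qgrad (c : Fin 6 → ℝ) (p : Pt) : Pt :=
  (2 * c 0 * p.1 + c 1 * p.2 + c 3, c 1 * p.1 + 2 * c 2 * p.2 + c 4)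

/-- The line through `X` and `Y`. -/
def lineThru (X Y : Pt) : Set Pt := {p | ∃ t : ℝ, p = X + t • (Y - X)}

/-- `L` is the tangent line at the nonsingular point `p` of the conic with coefficients `c`. -/
def IsTangentLineAt (c : Fin 6 → ℝ) (L : Set Pt) (p : Pt) : Prop :=
  qval c p = 0 ∧ qgrad c p ≠ 0 ∧
  L = {q | (qgrad c p).1 * (q.1 - p.1) + (qgrad c p).2 * (q.2 - p.2) = 0}

section AffineSpace

variable {k V S : Type*} [AddCommGroup V] [AddTorsor V S] {P Q R : S}

theorem affineIndependent_rotate [Ring k] [Module k V] (h : AffineIndependent k ![P, Q, R]) :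
    AffineIndependent k ![Q, R, P] :=
  h.comm_left.comm_right

theorem exists_lineMap_eq_of_collinear_of_ne [DivisionRing k] [Module k V]
    (h : Collinear k {P, Q, R}) (hPQ : P ≠ Q) : ∃ t : k, AffineMap.lineMap P Q t = R :=
  mem_affineSpan_pair_iff_exists_lineMap_eq.mp
    (h.mem_affineSpan_of_mem_of_ne (by simp) (by simp) (by simp) hPQ)

end AffineSpace

variable {k V : Type*} [Field k] [AddCommGroup V] [Module k V]
variable {A B C D E F D₃ E₃ F₃ P P' Q X : V} {x y z : k}

theorem eq_zero_of_affineIndependent_triple (h : AffineIndependent k ![A, B, C])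
    (hsum : x + y + z = 0) (hcomb : x • A + y • B + z • C = 0) : x = 0 ∧ y = 0 ∧ z = 0 := by
  have hw := affineIndependent_iff.mp h Finset.univ ![x, y, z]
    (by simpa [Fin.sum_univ_three] using hsum) (by simpa [Fin.sum_univ_three] using hcomb)
  exact ⟨hw 0 (Finset.mem_univ _), hw 1 (Finset.mem_univ _), hw 2 (Finset.mem_univ _)⟩

theorem collinear_of_smul_eq_smul_add_smul {a b : k} (hab : a + b ≠ 0)
    (h : (a + b) • X = a • P + b • Q) : Collinear k {P, Q, X} := by
  have hX : X = AffineMap.lineMap P Q (b / (a + b)) := by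
    rw [AffineMap.lineMap_apply_module]
    refine smul_right_injective V hab ?_
    simp only [h]
    match_scalars <;> field
  have hcol : Collinear k {X, P, Q} := collinear_insert_of_mem_affineSpan_pair
    (hX ▸ AffineMap.lineMap_mem_affineSpan_pair _ _ _)
  rwa [Set.insert_comm, Set.pair_comm X] at hcol

/-- The point `P` has homogeneous barycentric coordinates `(x : y : z)` with respect to `A`, `B`,
`C`. The definition clears the denominator `x + y + z`. -/
structure HasBarycentricCoords (A B C : V) (x y z : k) (P : V) : Prop where
  sum_ne_zero : x + y + z ≠ 0
  sum_smul : (x + y + z) • P = x • A + y • B + z • C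

/-- The complement of `X` with respect to `A`, `B`, `C`: the image of `X` under the homothety of
ratio `-1/2` centred at the centroid. The formula avoids the centroid, so that it also makes sense
in characteristic `3`. -/
def triangleComplement (k : Type*) [Field k] [Invertible (2 : k)] [Module k V] (A B C X : V) : V :=
  (⅟2 : k) • (A + B + C - X)

/-- `D`, `E`, `F` are the traces of `P` on the sides `BC`, `CA`, `AB`, that is, `DEF` is the cevian
triangle of `P` with respect to `ABC`. -/
structure IsCevianTriangle (k : Type*) [Field k] [Module k V] (A B C P D E F : V) : Prop where
  cevian_A : Collinear k {A, P, D}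
  side_BC : Collinear k {B, C, D}
  cevian_B : Collinear k {B, P, E}
  side_CA : Collinear k {C, A, E}
  cevian_C : Collinear k {C, P, F}
  side_AB : Collinear k {A, B, F}

namespace HasBarycentricCoords

theorem rotate (h : HasBarycentricCoords A B C x y z P) : HasBarycentricCoords B C A y z x P := by
  have hsum : y + z + x = x + y + z := by ring
  exact ⟨hsum ▸ h.sum_ne_zero, by rw [hsum, h.sum_smul]; abel⟩

theorem of_mul {t : k} (h : HasBarycentricCoords A B C (t * x) (t * y) (t * z) P) :
    HasBarycentricCoords A B C x y z P := by
  have hsum : t * x + t * y + t * z = t * (x + y + z) := by ring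
  have ht : t * (x + y + z) ≠ 0 := hsum ▸ h.sum_ne_zero
  refine ⟨right_ne_zero_of_mul ht, smul_right_injective V (left_ne_zero_of_mul ht) ?_⟩
  linear_combination (norm := module) h.sum_smul

theorem of_eq_div {s : k} (hs : s ≠ 0) (hsum : s = x + y + z)
    (hP : P = (x / s) • A + (y / s) • B + (z / s) • C) : HasBarycentricCoords A B C x y z P := by
  refine ⟨hsum ▸ hs, ?_⟩
  rw [← hsum, hP]
  match_scalars <;> field

theorem map {W : Type*} [AddCommGroup W] [Module k W] (h : HasBarycentricCoords A B C x y z P)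
    (f : V →ᵃ[k] W) : HasBarycentricCoords (f A) (f B) (f C) x y z (f P) := by
  have hlin := congrArg f.linear h.sum_smul
  simp only [map_add, map_smul] at hlin
  have hf (X : V) : f X = f.linear X + f 0 := congrFun f.decomp X
  refine ⟨h.sum_ne_zero, ?_⟩
  rw [hf A, hf B, hf C, hf P]
  linear_combination (norm := module) hlin

theorem complement [Invertible (2 : k)] (h : HasBarycentricCoords A B C x y z P) :
    HasBarycentricCoords A B C (y + z) (z + x) (x + y) (triangleComplement k A B C P) := by
  have hsum : y + z + (z + x) + (x + y) = (x + y + z) * 2 := by ring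
  refine ⟨hsum ▸ mul_ne_zero h.sum_ne_zero (Invertible.ne_zero 2), ?_⟩
  rw [hsum, triangleComplement, smul_smul, mul_assoc, mul_invOf_self, mul_one]
  linear_combination (norm := module) -h.sum_smul

theorem ne_vertex (hABC : AffineIndependent k ![A, B, C]) (hP : HasBarycentricCoords A B C x y z P)
    (hy : y ≠ 0) : P ≠ A := by
  rintro rfl
  have hcomb : (-(y + z)) • P + y • B + z • C = 0 := by
    linear_combination (norm := module) -hP.sum_smul
  exact hy (eq_zero_of_affineIndependent_triple hABC (by ring) hcomb).2.1

theorem trace (hABC : AffineIndependent k ![A, B, C]) (hP : HasBarycentricCoords A B C x y z P)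
    (hy : y ≠ 0) (hAPD : Collinear k {A, P, D}) (hBCD : Collinear k {B, C, D}) :
    HasBarycentricCoords A B C 0 y z D := by
  have hBC : B ≠ C := hABC.injective.ne (by decide : (1 : Fin 3) ≠ 2)
  obtain ⟨s, hs⟩ := exists_lineMap_eq_of_collinear_of_ne hAPD (hP.ne_vertex hABC hy).symm
  obtain ⟨t, ht⟩ := exists_lineMap_eq_of_collinear_of_ne hBCD hBC
  rw [AffineMap.lineMap_apply_module] at hs ht
  -- Compare the coefficients of `(x + y + z) • D` as a point of `AP` and as a point of `BC`.
  obtain ⟨-, hsy, hsz⟩ := eq_zero_of_affineIndependent_triple hABC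
    (x := (x + y + z) * (1 - s) + s * x) (y := s * y - (x + y + z) * (1 - t))
    (z := s * z - (x + y + z) * t) (by ring) (by
      linear_combination (norm := module) (x + y + z) • (hs - ht) - s • hP.sum_smul)
  have hsyz : s * (y + z) = x + y + z := by linear_combination hsy + hsz
  have hne : s * (y + z) ≠ 0 := hsyz ▸ hP.sum_ne_zero
  have hs0 : s ≠ 0 := left_ne_zero_of_mul hne
  have hyt : y = (y + z) * (1 - t) :=
    mul_left_cancel₀ hs0 (by linear_combination hsy - (1 - t) * hsyz)
  have hzt : z = (y + z) * t := mul_left_cancel₀ hs0 (by linear_combination hsz - t * hsyz)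
  refine ⟨by simpa using right_ne_zero_of_mul hne, ?_⟩
  linear_combination (norm := module) (-(y + z)) • ht - hyt • B - hzt • C

theorem vertex_of_traces [Invertible (2 : k)] (hx : x ≠ 0) (hD : HasBarycentricCoords A B C 0 y z D)
    (hE : HasBarycentricCoords B C A 0 z x E) (hF : HasBarycentricCoords C A B 0 x y F) :
    HasBarycentricCoords D E F (-(y + z)) (z + x) (x + y) A := by
  have hsum : -(y + z) + (z + x) + (x + y) = 2 * x := by ring
  refine ⟨hsum ▸ mul_ne_zero (Invertible.ne_zero 2) hx, ?_⟩
  linear_combination (norm := module) hD.sum_smul - hE.sum_smul - hF.sum_smul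

theorem of_isotomic_traces (hD₃ : HasBarycentricCoords A B C 0 z y D₃)
    (hE₃ : HasBarycentricCoords B C A 0 x z E₃) (hF₃ : HasBarycentricCoords C A B 0 y x F₃)
    (hX : HasBarycentricCoords D₃ E₃ F₃ (-(y + z)) (z + x) (x + y) X) :
    HasBarycentricCoords A B C (y + z) (x - z) (x - y) X := by
  have hsum : y + z + (x - z) + (x - y) = -(y + z) + (z + x) + (x + y) := by ring
  refine ⟨hsum ▸ hX.sum_ne_zero, ?_⟩
  linear_combination (norm := module)
    hX.sum_smul - hD₃.sum_smul + hE₃.sum_smul + hF₃.sum_smul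

theorem collinear_midpoint [Invertible (2 : k)] (hx : x ≠ 0)
    (hQ : HasBarycentricCoords A B C (z * x + x * y) (x * y + y * z) (y * z + z * x) Q)
    (hX : HasBarycentricCoords A B C (y + z) (x - z) (x - y) X) :
    Collinear k {Q, midpoint k B C, X} := by
  have hM : (2 : k) • midpoint k B C = B + C := by rw [two_smul, midpoint_add_self]
  have hsum : x * y + y * z + z * x + (x ^ 2 - (x * y + y * z + z * x)) = x ^ 2 := by ring
  have hcomb : x ^ 2 • X = (x * y + y * z + z * x) • Q +
      (x ^ 2 - (x * y + y * z + z * x)) • midpoint k B C := by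
    refine smul_right_injective V (Invertible.ne_zero (2 : k)) ?_
    linear_combination (norm := module)
      x • hX.sum_smul - hQ.sum_smul - (x ^ 2 - (x * y + y * z + z * x)) • hM
  exact collinear_of_smul_eq_smul_add_smul (hsum ▸ pow_ne_zero 2 hx) (by rw [hsum, hcomb])

end HasBarycentricCoords

namespace IsCevianTriangle

theorem rotate (h : IsCevianTriangle k A B C P D E F) : IsCevianTriangle k B C A P E F D :=
  ⟨h.cevian_B, h.side_CA, h.cevian_C, h.side_AB, h.cevian_A, h.side_BC⟩

theorem trace (h : IsCevianTriangle k A B C P D E F) (hABC : AffineIndependent k ![A, B, C])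
    (hP : HasBarycentricCoords A B C x y z P) (hy : y ≠ 0) : HasBarycentricCoords A B C 0 y z D :=
  hP.trace hABC hy h.cevian_A h.side_BC

theorem trace_isotomic (h : IsCevianTriangle k A B C P' D₃ E₃ F₃)
    (hABC : AffineIndependent k ![A, B, C]) (hx : x ≠ 0) (hz : z ≠ 0)
    (hP' : HasBarycentricCoords A B C (y * z) (z * x) (x * y) P') :
    HasBarycentricCoords A B C 0 z y D₃ := by
  have hD₃ := h.trace hABC hP' (mul_ne_zero hz hx)
  exact .of_mul (t := x) (by rwa [mul_zero, mul_comm x z])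

end IsCevianTriangle

theorem collinear_midpoint_map_vertex [Invertible (2 : k)] (hABC : AffineIndependent k ![A, B, C])
    (hx : x ≠ 0) (hy : y ≠ 0) (hz : z ≠ 0) (hP : HasBarycentricCoords A B C x y z P)
    (hP' : HasBarycentricCoords A B C (y * z) (z * x) (x * y) P')
    (hQ : HasBarycentricCoords A B C (z * x + x * y) (x * y + y * z) (y * z + z * x) Q)
    (hDEF : IsCevianTriangle k A B C P D E F) (L : V →ᵃ[k] V)
    (hLDEF : IsCevianTriangle k A B C P' (L D) (L E) (L F)) :
    Collinear k {Q, midpoint k B C, L A} := by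
  have hBCA := affineIndependent_rotate hABC
  have hCAB := affineIndependent_rotate hBCA
  have hA : HasBarycentricCoords D E F (-(y + z)) (z + x) (x + y) A :=
    .vertex_of_traces hx (hDEF.trace hABC hP hy) (hDEF.rotate.trace hBCA hP.rotate hz)
      (hDEF.rotate.rotate.trace hCAB hP.rotate.rotate hx)
  have hLA : HasBarycentricCoords A B C (y + z) (x - z) (x - y) (L A) :=
    .of_isotomic_traces (hLDEF.trace_isotomic hABC hx hz hP')
      (hLDEF.rotate.trace_isotomic hBCA hy hx hP'.rotate)
      (hLDEF.rotate.rotate.trace_isotomic hCAB hz hy hP'.rotate.rotate) (hA.map L)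
  exact hQ.collinear_midpoint hx hLA

theorem Q_perspector_of_medial_and_lambda_triangle_general [Invertible (2 : k)]
    (hABC : AffineIndependent k ![A, B, C]) (hx : x ≠ 0) (hy : y ≠ 0) (hz : z ≠ 0)
    (hP : HasBarycentricCoords A B C x y z P)
    (hP' : HasBarycentricCoords A B C (y * z) (z * x) (x * y) P')
    (hDEF : IsCevianTriangle k A B C P D E F) (L : V →ᵃ[k] V)
    (hLDEF : IsCevianTriangle k A B C P' (L D) (L E) (L F)) :
    Collinear k {triangleComplement k A B C P', midpoint k B C, L A} ∧
    Collinear k {triangleComplement k A B C P', midpoint k C A, L B} ∧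
    Collinear k {triangleComplement k A B C P', midpoint k A B, L C} := by
  have hBCA := affineIndependent_rotate hABC
  have hQ := hP'.complement
  exact ⟨collinear_midpoint_map_vertex hABC hx hy hz hP hP' hQ hDEF L hLDEF,
    collinear_midpoint_map_vertex hBCA hy hz hx hP.rotate hP'.rotate hQ.rotate hDEF.rotate L
      hLDEF.rotate,
    collinear_midpoint_map_vertex (affineIndependent_rotate hBCA) hz hx hy hP.rotate.rotate
      hP'.rotate.rotate hQ.rotate.rotate hDEF.rotate.rotate L hLDEF.rotate.rotate⟩

theorem homoth_cent_eq_triangleComplement (A B C X : Pt) :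
    homoth (cent A B C) (-(1 / 2)) X = triangleComplement ℝ A B C X := by
  rw [homoth, cent, triangleComplement, invOf_eq_inv]
  module

theorem Q_perspector_of_medial_and_lambda_triangle
    (A B C P P' Q Q' D E F D₃ E₃ F₃ : Pt) (x y z : ℝ)
    (hABC : AffineIndependent ℝ ![A, B, C])
    (hsum : x + y + z = 1)
    (hPco : P = x • A + y • B + z • C)
    (hx0 : x ≠ 0) (hy0 : y ≠ 0) (hz0 : z ≠ 0)
    (hx1 : x ≠ 1) (hy1 : y ≠ 1) (hz1 : z ≠ 1)
    (hst : x * y + y * z + z * x ≠ 0)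
    (hP' : P' = (y * z / (x * y + y * z + z * x)) • A
        + (x * z / (x * y + y * z + z * x)) • B
        + (x * y / (x * y + y * z + z * x)) • C)
    (hQ : Q = homoth (cent A B C) (-(1 / 2)) P')
    (hQ' : Q' = homoth (cent A B C) (-(1 / 2)) P)
    (hD : Collinear ℝ {A, P, D} ∧ Collinear ℝ {B, C, D})
    (hE : Collinear ℝ {B, P, E} ∧ Collinear ℝ {A, C, E})
    (hF : Collinear ℝ {C, P, F} ∧ Collinear ℝ {A, B, F})
    (hD₃ : Collinear ℝ {A, P', D₃} ∧ Collinear ℝ {B, C, D₃})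
    (hE₃ : Collinear ℝ {B, P', E₃} ∧ Collinear ℝ {A, C, E₃})
    (hF₃ : Collinear ℝ {C, P', F₃} ∧ Collinear ℝ {A, B, F₃})
    (hxy : x ≠ y) (hyz : y ≠ z) (hxz : x ≠ z)
    (TP : Pt ≃ᵃ[ℝ] Pt) (hTP : TP A = D ∧ TP B = E ∧ TP C = F)
    (TP' : Pt ≃ᵃ[ℝ] Pt) (hTP' : TP' A = D₃ ∧ TP' B = E₃ ∧ TP' C = F₃) :
    Collinear ℝ {Q, midpoint ℝ B C, TP' (TP.symm A)} ∧
    Collinear ℝ {Q, midpoint ℝ C A, TP' (TP.symm B)} ∧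
    Collinear ℝ {Q, midpoint ℝ A B, TP' (TP.symm C)} := by
  obtain ⟨rfl, rfl, rfl⟩ := hTP
  obtain ⟨rfl, rfl, rfl⟩ := hTP'
  have hPbary : HasBarycentricCoords A B C x y z P := ⟨by simp [hsum], by rw [hsum, one_smul, hPco]⟩
  have hP'bary : HasBarycentricCoords A B C (y * z) (z * x) (x * y) P' :=
    .of_eq_div hst (by ring) (mul_comm x z ▸ hP')
  have hDEF : IsCevianTriangle ℝ A B C P (TP A) (TP B) (TP C) :=
    ⟨hD.1, hD.2, hE.1, Set.insert_comm A C _ ▸ hE.2, hF.1, hF.2⟩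
  have hDEF₃ : IsCevianTriangle ℝ A B C P' (TP' A) (TP' B) (TP' C) :=
    ⟨hD₃.1, hD₃.2, hE₃.1, Set.insert_comm A C _ ▸ hE₃.2, hF₃.1, hF₃.2⟩
  rw [hQ, homoth_cent_eq_triangleComplement]
  exact Q_perspector_of_medial_and_lambda_triangle_general hABC hx0 hy0 hz0 hPbary hP'bary hDEF
    (TP.symm.trans TP').toAffineMap (by simpa using hDEF₃)
end
end

section
/- Assume P does not lie on a median of ABC (a line joining a vertex to the midpoint of the opposite side). Let H̃ = T_{P′}⁻¹(Q). Then the points T_{P′}⁻¹(A), D₃, H̃ are collinear; the points T_{P′}⁻¹(B), E₃, H̃ are collinear; and the points T_{P′}⁻¹(C), F₃, H̃ are collinear. That is, H̃ is the perspector of the anticevian triangle T_{P′}⁻¹(A)T_{P′}⁻¹(B)T_{P′}⁻¹(C) of Q and the cevian triangle D₃E₃F₃ of P′. -/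
noncomputable section

/-!
If `P'` has barycentric weights `(a : b : c)`, then its trace `D₃` has weights `(0 : b : c)`, and
its complement `Q`, determined by `2Q = A + B + C - P'`, has weights `(b + c : c + a : a + b)`.
An affine map `T` with `T A = D₃`, `T B = E₃`, `T C = F₃` sends `D₃` to the combination of
`E₃ = (a : 0 : c)` and `F₃ = (a : b : 0)` with weights `b` and `c`. Its weights at `B` and `C` are
in the ratio `c + a : a + b`, as those of `Q` are, so `A`, `T D₃`, `Q` are collinear. Applying
`T⁻¹` gives the claim at `A`; the claims at `B` and `C` follow by cyclic symmetry.
-/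

section CommRing

variable {R V : Type*} [CommRing R] [AddCommGroup V] [Module R V]

theorem weights_eq_of_affineIndependent {A B C : V} {a b c a' b' c' : R}
    (hABC : AffineIndependent R ![A, B, C]) (hsum : a + b + c = a' + b' + c')
    (h : a • A + b • B + c • C = a' • A + b' • B + c' • C) : a = a' ∧ b = b' ∧ c = c' := by
  have hzero := affineIndependent_iff.1 hABC Finset.univ ![a - a', b - b', c - c']
    (by simp only [Fin.sum_univ_three, Matrix.cons_val]; linear_combination hsum)
    (by simp only [Fin.sum_univ_three, Matrix.cons_val]; linear_combination (norm := module) h)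
  exact ⟨sub_eq_zero.1 (hzero 0 (Finset.mem_univ _)), sub_eq_zero.1 (hzero 1 (Finset.mem_univ _)),
    sub_eq_zero.1 (hzero 2 (Finset.mem_univ _))⟩

theorem affineMap_add_smul_eq {W : Type*} [AddCommGroup W] [Module R W] (f : V →ᵃ[R] W)
    {X Y Z : V} {s t : R} (h : (s + t) • X = s • Y + t • Z) :
    (s + t) • f X = s • f Y + t • f Z := by
  have hlin := congrArg f.linear h
  simp only [map_add, map_smul] at hlin
  have hf (v : V) : f v = f.linear v + f 0 := congrFun f.decomp v
  rw [hf X, hf Y, hf Z]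
  linear_combination (norm := module) hlin

theorem isotomic_weights_add_ne_zero [NoZeroDivisors R] {x y z : R} (hsum : x + y + z = 1)
    (hx0 : x ≠ 0) (hy0 : y ≠ 0) (hz0 : z ≠ 0) (hx1 : x ≠ 1) (hy1 : y ≠ 1) (hz1 : z ≠ 1) :
    x * z + x * y ≠ 0 ∧ x * y + y * z ≠ 0 ∧ y * z + x * z ≠ 0 := by
  have hx : x * z + x * y = x * (1 - x) := by linear_combination x * hsum
  have hy : x * y + y * z = y * (1 - y) := by linear_combination y * hsum
  have hz : y * z + x * z = z * (1 - z) := by linear_combination z * hsum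
  rw [hx, hy, hz]
  exact ⟨mul_ne_zero hx0 (sub_ne_zero.2 hx1.symm), mul_ne_zero hy0 (sub_ne_zero.2 hy1.symm),
    mul_ne_zero hz0 (sub_ne_zero.2 hz1.symm)⟩

end CommRing

section Field

variable {k V : Type*} [Field k] [AddCommGroup V] [Module k V]

theorem collinear_of_add_smul_eq {X Y Z : V} {s t : k} (hst : s + t ≠ 0)
    (h : (s + t) • X = s • Y + t • Z) : Collinear k {Y, X, Z} := by
  have hX : AffineMap.lineMap Y Z (t / (s + t)) = X := by
    rw [← (smul_right_injective V hst).eq_iff, h, AffineMap.lineMap_apply_module]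
    match_scalars <;> field_simp
    ring
  rw [Set.insert_comm]
  exact collinear_insert_of_mem_affineSpan_pair
    (mem_affineSpan_pair_iff_exists_lineMap_eq.2 ⟨_, hX⟩)

theorem add_smul_isotomic_eq {A B C X : V} {x y z : k} (hst : x * y + y * z + z * x ≠ 0)
    (hX : X = (y * z / (x * y + y * z + z * x)) • A + (x * z / (x * y + y * z + z * x)) • B
      + (x * y / (x * y + y * z + z * x)) • C) :
    (y * z + x * z + x * y) • X = (y * z) • A + (x * z) • B + (x * y) • C := by
  rw [hX, show y * z + x * z + x * y = x * y + y * z + z * x by ring]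
  simp only [smul_add, smul_smul, mul_div_cancel₀ _ hst]

theorem add_smul_trace_eq {A B C X D : V} {a b c : k} (hABC : AffineIndependent k ![A, B, C])
    (hX : (a + b + c) • X = a • A + b • B + c • C)
    (hAXD : Collinear k {A, X, D}) (hBCD : Collinear k {B, C, D}) :
    (b + c) • D = b • B + c • C := by
  have hBCA : ¬Collinear k {B, C, A} :=
    affineIndependent_iff_not_collinear_set.1 hABC.comm_left.comm_right
  have hAD : A ≠ D := fun h => hBCA (h ▸ hBCD)
  obtain ⟨t, rfl⟩ := mem_affineSpan_pair_iff_exists_lineMap_eq.1 <|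
    hBCD.mem_affineSpan_of_mem_of_ne (p₃ := D) (by simp) (by simp) (by simp)
      (ne₁₂_of_not_collinear hBCA)
  obtain ⟨r, rfl⟩ := mem_affineSpan_pair_iff_exists_lineMap_eq.1 <|
    hAXD.mem_affineSpan_of_mem_of_ne (p₃ := X) (by simp) (by simp) (by simp) hAD
  simp only [AffineMap.lineMap_apply_module] at hX ⊢
  have hweights : ((a + b + c) * (1 - r)) • A + ((a + b + c) * (r * (1 - t))) • B
      + ((a + b + c) * (r * t)) • C = a • A + b • B + c • C := by
    linear_combination (norm := module) hX
  obtain ⟨-, hb, hc⟩ := weights_eq_of_affineIndependent hABC (by ring) hweights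
  have hcross : c * (1 - t) = b * t := by linear_combination t * hb - (1 - t) * hc
  linear_combination (norm := module) hcross • (B - C)

theorem collinear_symm_vertex_trace_symm_complement {A B C D Q : V} {a b c : k} (T : V ≃ᵃ[k] V)
    (hbc : b + c ≠ 0) (hca : c + a ≠ 0) (hab : a + b ≠ 0)
    (hD : (b + c) • D = b • B + c • C)
    (hTB : (c + a) • T B = c • C + a • A) (hTC : (a + b) • T C = a • A + b • B)
    (hQ : (2 * (a + b + c)) • Q = (b + c) • A + (c + a) • B + (a + b) • C) :
    Collinear k {T.symm A, D, T.symm Q} := by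
  have hTD : (b + c) • T D = b • T B + c • T C := affineMap_add_smul_eq T.toAffineMap hD
  have hTD_weights : ((b + c) * (c + a) * (a + b)) • T D
      = (a * b * (a + b) + a * c * (c + a)) • A + (b * c) • ((c + a) • B + (a + b) • C) := by
    linear_combination (norm := module) ((c + a) * (a + b)) • hTD + (b * (a + b)) • hTB
      + (c * (c + a)) • hTC
  let s := a * b * (a + b) + a * c * (c + a) - b * c * (b + c)
  let t := b * c * (2 * (a + b + c))
  have hst : s + t = (b + c) * (c + a) * (a + b) := by ring
  have hTD_line : (s + t) • T D = s • A + t • Q := by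
    rw [hst]
    linear_combination (norm := module) hTD_weights - (b * c) • hQ
  have hD_line : (s + t) • D = s • T.symm A + t • T.symm Q := by
    simpa using affineMap_add_smul_eq T.symm.toAffineMap hTD_line
  have hst_ne : s + t ≠ 0 := hst ▸ mul_ne_zero (mul_ne_zero hbc hca) hab
  exact collinear_of_add_smul_eq hst_ne hD_line

theorem Htilde_perspector_of_anticevian_and_cevian_general {A B C P' Q D₃ E₃ F₃ : V} {a b c : k}
    (hABC : AffineIndependent k ![A, B, C])
    (hP' : (a + b + c) • P' = a • A + b • B + c • C)
    (hbc : b + c ≠ 0) (hca : c + a ≠ 0) (hab : a + b ≠ 0)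
    (hQ : (2 : k) • Q = A + B + C - P')
    (hD₃ : Collinear k {A, P', D₃} ∧ Collinear k {B, C, D₃})
    (hE₃ : Collinear k {B, P', E₃} ∧ Collinear k {A, C, E₃})
    (hF₃ : Collinear k {C, P', F₃} ∧ Collinear k {A, B, F₃})
    (T : V ≃ᵃ[k] V) (hT : T A = D₃ ∧ T B = E₃ ∧ T C = F₃) :
    Collinear k {T.symm A, D₃, T.symm Q} ∧
    Collinear k {T.symm B, E₃, T.symm Q} ∧
    Collinear k {T.symm C, F₃, T.symm Q} := by
  obtain ⟨rfl, rfl, rfl⟩ := hT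
  have hBCA : AffineIndependent k ![B, C, A] := hABC.comm_left.comm_right
  have hCAB : AffineIndependent k ![C, A, B] := hBCA.comm_left.comm_right
  have hP'BCA : (b + c + a) • P' = b • B + c • C + a • A := by
    linear_combination (norm := module) hP'
  have hP'CAB : (c + a + b) • P' = c • C + a • A + b • B := by
    linear_combination (norm := module) hP'
  have hA : (b + c) • T A = b • B + c • C := add_smul_trace_eq hABC hP' hD₃.1 hD₃.2
  have hB : (c + a) • T B = c • C + a • A :=
    add_smul_trace_eq hBCA hP'BCA hE₃.1 (by rw [Set.insert_comm]; exact hE₃.2)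
  have hC : (a + b) • T C = a • A + b • B := add_smul_trace_eq hCAB hP'CAB hF₃.1 hF₃.2
  have hQABC : (2 * (a + b + c)) • Q = (b + c) • A + (c + a) • B + (a + b) • C := by
    linear_combination (norm := module) (a + b + c) • hQ - hP'
  have hQBCA : (2 * (b + c + a)) • Q = (c + a) • B + (a + b) • C + (b + c) • A := by
    linear_combination (norm := module) hQABC
  have hQCAB : (2 * (c + a + b)) • Q = (a + b) • C + (b + c) • A + (c + a) • B := by
    linear_combination (norm := module) hQABC
  exact ⟨collinear_symm_vertex_trace_symm_complement T hbc hca hab hA hB hC hQABC,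
    collinear_symm_vertex_trace_symm_complement T hca hab hbc hB hC hA hQBCA,
    collinear_symm_vertex_trace_symm_complement T hab hbc hca hC hA hB hQCAB⟩

end Field

theorem two_smul_homoth_cent (A B C X : Pt) :
    (2 : ℝ) • homoth (cent A B C) (-(1 / 2)) X = A + B + C - X := by
  simp only [homoth, cent]
  module

theorem Htilde_perspector_of_anticevian_and_cevian
    (A B C P P' Q Q' D E F D₃ E₃ F₃ : Pt) (x y z : ℝ)
    (hABC : AffineIndependent ℝ ![A, B, C])
    (hsum : x + y + z = 1)
    (hPco : P = x • A + y • B + z • C)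
    (hx0 : x ≠ 0) (hy0 : y ≠ 0) (hz0 : z ≠ 0)
    (hx1 : x ≠ 1) (hy1 : y ≠ 1) (hz1 : z ≠ 1)
    (hst : x * y + y * z + z * x ≠ 0)
    (hP' : P' = (y * z / (x * y + y * z + z * x)) • A
        + (x * z / (x * y + y * z + z * x)) • B
        + (x * y / (x * y + y * z + z * x)) • C)
    (hQ : Q = homoth (cent A B C) (-(1 / 2)) P')
    (hQ' : Q' = homoth (cent A B C) (-(1 / 2)) P)
    (hD : Collinear ℝ {A, P, D} ∧ Collinear ℝ {B, C, D})
    (hE : Collinear ℝ {B, P, E} ∧ Collinear ℝ {A, C, E})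
    (hF : Collinear ℝ {C, P, F} ∧ Collinear ℝ {A, B, F})
    (hD₃ : Collinear ℝ {A, P', D₃} ∧ Collinear ℝ {B, C, D₃})
    (hE₃ : Collinear ℝ {B, P', E₃} ∧ Collinear ℝ {A, C, E₃})
    (hF₃ : Collinear ℝ {C, P', F₃} ∧ Collinear ℝ {A, B, F₃})
    (hxy : x ≠ y) (hyz : y ≠ z) (hxz : x ≠ z)
    (TP' : Pt ≃ᵃ[ℝ] Pt) (hTP' : TP' A = D₃ ∧ TP' B = E₃ ∧ TP' C = F₃) :
    Collinear ℝ {TP'.symm A, D₃, TP'.symm Q} ∧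
    Collinear ℝ {TP'.symm B, E₃, TP'.symm Q} ∧
    Collinear ℝ {TP'.symm C, F₃, TP'.symm Q} := by
  obtain ⟨hbc, hca, hab⟩ := isotomic_weights_add_ne_zero hsum hx0 hy0 hz0 hx1 hy1 hz1
  exact Htilde_perspector_of_anticevian_and_cevian_general hABC (add_smul_isotomic_eq hst hP')
    hbc hca hab (hQ ▸ two_smul_homoth_cent A B C P') hD₃ hE₃ hF₃ TP' hTP'
end
end

section
/- Assume the generalized circumcenter O is not the midpoint of any side of ABC, so that H does not coincide with any vertex. Then the complement K(C̃_O) is the nine-point conic N_H of the quadrangle ABCH; N_H is also the image of C̃_O under the homothety with center H and ratio 1/2; and the center of N_H is the midpoint N of segment HO. -/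
noncomputable section

/-! The point `H` is `K⁻¹(O)`: since `A` and `K⁻¹(O)` are the anticomplements of `D₀` and `O`, the
point `K⁻¹(O)` lies on the parallels to `QD` and `QE` through `A` and `B`; these directions are
independent, so no other point does.

Let `q = 0` be an equation of `C̃_O`. The difference between `q` and its reflection in `O` is an
affine function vanishing at `A`, `B`, `C`, hence zero, so the differential of `q` vanishes at `O`.
Put `Y = K⁻¹(X)` for the foot `X = AH · BC`. The chord `AY` is parallel to `BC` and its midpoint
lies on the diameter `OD₀`, which bisects every chord parallel to `BC`; hence `Y` lies on `C̃_O`.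
The midpoint of `AH` is the complement of the reflection of `A` in `O`, and `K` preceded by that
reflection is the homothety with center `H` and ratio `1/2`. -/

section Barycentric

variable {K V : Type*} [Field K] [AddCommGroup V] [Module K V] {A B C D E P Q : V} {x y z : K}

theorem linearIndependent_sub_sub (hABC : AffineIndependent K ![A, B, C]) :
    LinearIndependent K ![B - A, C - A] := by
  rw [affineIndependent_iff_linearIndependent_vsub K _ (0 : Fin 3),
    ← linearIndependent_equiv (finSuccAboveEquiv (0 : Fin 3))] at hABC
  have hvec : ![B - A, C - A] =
      (fun i : {i : Fin 3 // i ≠ 0} => ![A, B, C] i -ᵥ ![A, B, C] 0) ∘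
        finSuccAboveEquiv (0 : Fin 3) := by
    ext i
    fin_cases i <;> rfl
  rwa [hvec]

theorem eq_zero_of_apply_sub_eq_zero {f : V →ₗ[K] K} (hV : Module.finrank K V = 2)
    (hABC : AffineIndependent K ![A, B, C]) (hB : f (B - A) = 0) (hC : f (C - A) = 0) :
    f = 0 := by
  have hind := linearIndependent_sub_sub hABC
  refine (basisOfLinearIndependentOfCardEqFinrank hind (by simp [hV])).ext fun i => ?_
  fin_cases i <;> simp [hB, hC]

theorem midpoint_eq_inv_two_smul [Invertible (2 : K)] (A B : V) :
    midpoint K A B = (2⁻¹ : K) • (A + B) := by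
  rw [midpoint_eq_smul_add, invOf_eq_inv]

theorem exists_lineMap_eq_of_collinear (h : Collinear K {A, B, C}) (hAB : A ≠ B) :
    ∃ t : K, AffineMap.lineMap A B t = C :=
  mem_affineSpan_pair_iff_exists_lineMap_eq.1
    (h.mem_affineSpan_of_mem_of_ne (by simp) (by simp) (by simp) hAB)

theorem smul_trace_eq (hABC : AffineIndependent K ![A, B, C]) (hsum : x + y + z = 1)
    (hP : P = x • A + y • B + z • C) (hx : x ≠ 1)
    (hAPD : Collinear K {A, P, D}) (hBCD : Collinear K {B, C, D}) :
    (y + z) • D = y • B + z • C := by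
  have hind := linearIndependent_sub_sub hABC
  have hPA : P - A = y • (B - A) + z • (C - A) := by
    obtain rfl : x = 1 - y - z := by linear_combination hsum
    rw [hP]
    module
  have hAP : A ≠ P := by
    intro h
    obtain ⟨hy, hz⟩ := hind.eq_zero_of_pair (by rw [← hPA, h, sub_self])
    exact hx (by rw [← hsum, hy, hz, add_zero, add_zero])
  have hBC : B ≠ C := hABC.injective.ne (by decide : (1 : Fin 3) ≠ 2)
  obtain ⟨t, ht⟩ := exists_lineMap_eq_of_collinear hAPD hAP
  obtain ⟨r, hr⟩ := exists_lineMap_eq_of_collinear hBCD hBC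
  rw [AffineMap.lineMap_apply_module'] at ht hr
  obtain ⟨hty, htz⟩ := hind.eq_of_pair (s := t * y) (t := t * z) (s' := 1 - r) (t' := r) <| by
    calc (t * y) • (B - A) + (t * z) • (C - A) = t • (P - A) + A - A := by rw [hPA]; module
      _ = r • (C - B) + B - A := by rw [ht, hr]
      _ = (1 - r) • (B - A) + r • (C - A) := by module
  have hrz : r * (y + z) = z := by linear_combination z * hty - y * htz
  calc (y + z) • D = (r * (y + z)) • (C - B) + (y + z) • B := by rw [← hr]; module
    _ = y • B + z • C := by rw [hrz]; module

theorem linearIndependent_trace_sub_isotomcomplement (h2 : (2 : K) ≠ 0)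
    (hABC : AffineIndependent K ![A, B, C]) (hx : x ≠ 0) (hy : y ≠ 0) (hz : z ≠ 0)
    (hyz : y + z ≠ 0) (hxz : x + z ≠ 0) (hs : x * y + y * z + z * x ≠ 0)
    (hD : (y + z) • D = y • B + z • C) (hE : (x + z) • E = x • A + z • C)
    (hQ : (2 * (x * y + y * z + z * x)) • Q =
      (x * (y + z)) • A + (y * (x + z)) • B + (z * (x + y)) • C) :
    LinearIndependent K ![D - Q, E - Q] := by
  set s := x * y + y * z + z * x with hs_def
  have hDQ : (2 * s * (y + z)) • (D - Q) =
      (y * (s - z ^ 2)) • (B - A) + (z * (s - y ^ 2)) • (C - A) := by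
    calc (2 * s * (y + z)) • (D - Q) = (2 * s) • ((y + z) • D) - (y + z) • ((2 * s) • Q) := by
          module
      _ = _ := by rw [hD, hQ, hs_def]; module
  have hEQ : (2 * s * (x + z)) • (E - Q) =
      (-(y * (x + z) ^ 2)) • (B - A) + (z * (s - x ^ 2)) • (C - A) := by
    calc (2 * s * (x + z)) • (E - Q) = (2 * s) • ((x + z) • E) - (x + z) • ((2 * s) • Q) := by
          module
      _ = _ := by rw [hE, hQ, hs_def]; module
  have hdet : y * (s - z ^ 2) * (z * (s - x ^ 2)) - z * (s - y ^ 2) * -(y * (x + z) ^ 2) =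
      2 * 2 * x * y * z ^ 2 * s := by
    rw [hs_def]; ring
  have hdet_ne : 2 * 2 * x * y * z ^ 2 * s ≠ 0 := by simp [h2, hx, hy, hz, hs]
  rw [← LinearIndependent.pair_smul_smul_iff (u := 2 * s * (y + z)) (v := 2 * s * (x + z))
    (by simp [h2, hs, hyz]) (by simp [h2, hs, hxz]), hDQ, hEQ,
    LinearIndependent.pair_add_smul_add_smul_iff]
  exact ⟨linearIndependent_sub_sub hABC, sub_ne_zero.1 (hdet ▸ hdet_ne)⟩

end Barycentric

section Homothety

variable (A B C X Z : Pt)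

theorem homoth_neg_half_eq_midpoint :
    homoth Z (-(1 / 2)) X = midpoint ℝ (homoth Z (-2) X) X := by
  rw [midpoint_eq_inv_two_smul]
  unfold homoth
  module

theorem leftInverse_homoth_inv {r : ℝ} (hr : r ≠ 0) :
    Function.LeftInverse (homoth Z r⁻¹) (homoth Z r) := by
  intro X
  simp [homoth, hr]

theorem homoth_cent_neg_half :
    homoth (cent A B C) (-(1 / 2)) X = (2⁻¹ : ℝ) • (A + B + C - X) := by
  unfold homoth cent
  module

theorem homoth_cent_neg_two : homoth (cent A B C) (-2) X = A + B + C - (2 : ℝ) • X := by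
  unfold homoth cent
  module

variable {A B C X}

theorem homoth_cent_neg_two_eq_left_iff :
    homoth (cent A B C) (-2) X = A ↔ X = midpoint ℝ B C := by
  rw [homoth_cent_neg_two, midpoint_eq_inv_two_smul, eq_inv_smul_iff₀ two_ne_zero,
    sub_eq_iff_eq_add', add_assoc, add_comm, add_right_cancel_iff, eq_comm]

theorem cent_rotate : cent B C A = cent A B C := by
  unfold cent
  module

end Homothety

section Parallel

theorem Par.exists_eq_smul {u v : Pt} (h : Par u v) (hv : v ≠ 0) : ∃ t : ℝ, u = t • v := by
  obtain ⟨t, rfl | rfl⟩ := h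
  · exact ⟨t, rfl⟩
  · exact ⟨t⁻¹, (inv_smul_smul₀ (left_ne_zero_of_smul hv) u).symm⟩

theorem eq_homoth_cent_neg_two_of_par {A B C O H d e : Pt} (hde : LinearIndependent ℝ ![d, e])
    (hOd : Par (midpoint ℝ B C - O) d) (hOe : Par (midpoint ℝ C A - O) e)
    (hHd : Par (H - A) d) (hHe : Par (H - B) e) :
    H = homoth (cent A B C) (-2) O := by
  obtain ⟨a, ha⟩ := hOd.exists_eq_smul (hde.ne_zero 0)
  obtain ⟨b, hb⟩ := hOe.exists_eq_smul (hde.ne_zero 1)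
  obtain ⟨a', ha'⟩ := hHd.exists_eq_smul (hde.ne_zero 0)
  obtain ⟨b', hb'⟩ := hHe.exists_eq_smul (hde.ne_zero 1)
  rw [midpoint_eq_inv_two_smul] at ha hb
  rw [homoth_cent_neg_two]
  have hd : H - (A + B + C - (2 : ℝ) • O) = (a' - 2 * a) • d := by
    calc _ = (H - A) - (2 : ℝ) • ((2⁻¹ : ℝ) • (B + C) - O) := by module
      _ = (a' - 2 * a) • d := by rw [ha, ha']; module
  have he : H - (A + B + C - (2 : ℝ) • O) = (b' - 2 * b) • e := by
    calc _ = (H - B) - (2 : ℝ) • ((2⁻¹ : ℝ) • (C + A) - O) := by module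
      _ = (b' - 2 * b) • e := by rw [hb, hb']; module
  obtain ⟨ha0, -⟩ := hde.eq_zero_of_pair' (hd.symm.trans he)
  rwa [ha0, zero_smul, sub_eq_zero] at hd

end Parallel

section GeneralizedOrthocenter

variable {A B C P P' Q D E O H : Pt} {x y z : ℝ}

theorem smul_isotomcomplement_eq (hst : x * y + y * z + z * x ≠ 0)
    (hP' : P' = (y * z / (x * y + y * z + z * x)) • A
        + (x * z / (x * y + y * z + z * x)) • B
        + (x * y / (x * y + y * z + z * x)) • C)
    (hQ : Q = homoth (cent A B C) (-(1 / 2)) P') :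
    (2 * (x * y + y * z + z * x)) • Q =
      (x * (y + z)) • A + (y * (x + z)) • B + (z * (x + y)) • C := by
  set s := x * y + y * z + z * x with hs
  have hsP' : s • P' = (y * z) • A + (x * z) • B + (x * y) • C := by
    simp only [hP', smul_add, smul_smul, mul_div_cancel₀ _ hst]
  calc (2 * s) • Q = s • (A + B + C) - s • P' := by rw [hQ, homoth_cent_neg_half]; module
    _ = _ := by rw [hsP', hs]; module

theorem generalizedOrthocenter_eq (hABC : AffineIndependent ℝ ![A, B, C]) (hsum : x + y + z = 1)
    (hP : P = x • A + y • B + z • C) (hx0 : x ≠ 0) (hy0 : y ≠ 0) (hz0 : z ≠ 0)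
    (hx1 : x ≠ 1) (hy1 : y ≠ 1) (hst : x * y + y * z + z * x ≠ 0)
    (hP' : P' = (y * z / (x * y + y * z + z * x)) • A
        + (x * z / (x * y + y * z + z * x)) • B
        + (x * y / (x * y + y * z + z * x)) • C)
    (hQ : Q = homoth (cent A B C) (-(1 / 2)) P')
    (hD : Collinear ℝ {A, P, D} ∧ Collinear ℝ {B, C, D})
    (hE : Collinear ℝ {B, P, E} ∧ Collinear ℝ {A, C, E})
    (hOD : Par (midpoint ℝ B C - O) (D - Q)) (hOE : Par (midpoint ℝ C A - O) (E - Q))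
    (hHD : Par (H - A) (D - Q)) (hHE : Par (H - B) (E - Q)) :
    H = homoth (cent A B C) (-2) O := by
  have hyz : y + z ≠ 0 := fun h => hx1 (by linear_combination hsum - h)
  have hxz : x + z ≠ 0 := fun h => hy1 (by linear_combination hsum - h)
  have hD' := smul_trace_eq hABC hsum hP hx1 hD.1 hD.2
  have hE' := smul_trace_eq hABC.comm_left (by rwa [add_comm y]) (by rw [hP, add_comm (x • A)])
    hy1 hE.1 hE.2
  exact eq_homoth_cent_neg_two_of_par
    (linearIndependent_trace_sub_isotomcomplement two_ne_zero hABC hx0 hy0 hz0 hyz hxz hst hD' hE'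
      (smul_isotomcomplement_eq hst hP' hQ)) hOD hOE hHD hHE

end GeneralizedOrthocenter

section Conic

variable {c : Fin 6 → ℝ} {A B C O Y Z : Pt} {S : Set Pt}

/-- The differential at `p` of the quadratic polynomial with coefficients `c`: the functional
dual to the gradient `qgrad c p`. -/
def qdiff (c : Fin 6 → ℝ) (p : Pt) : Pt →ₗ[ℝ] ℝ :=
  (qgrad c p).1 • LinearMap.fst ℝ ℝ ℝ + (qgrad c p).2 • LinearMap.snd ℝ ℝ ℝ

theorem qdiff_apply (c : Fin 6 → ℝ) (p v : Pt) :
    qdiff c p v = (qgrad c p).1 * v.1 + (qgrad c p).2 * v.2 := rfl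

theorem qval_sub_qval (c : Fin 6 → ℝ) (p q : Pt) :
    qval c p - qval c q = qdiff c (midpoint ℝ p q) (p - q) := by
  simp only [qdiff_apply, qgrad, qval, midpoint_eq_inv_two_smul, Prod.smul_fst, Prod.smul_snd,
    Prod.fst_add, Prod.snd_add, Prod.fst_sub, Prod.snd_sub, smul_eq_mul]
  ring

theorem qdiff_lineMap (c : Fin 6 → ℝ) (p q : Pt) (t : ℝ) :
    qdiff c (AffineMap.lineMap p q t) = (1 - t) • qdiff c p + t • qdiff c q := by
  refine LinearMap.ext fun v => ?_
  simp only [LinearMap.add_apply, LinearMap.smul_apply, qdiff_apply, qgrad,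
    AffineMap.lineMap_apply_module, Prod.fst_add, Prod.snd_add, Prod.smul_fst, Prod.smul_snd,
    smul_eq_mul]
  ring

theorem qdiff_center_eq_zero (hABC : AffineIndependent ℝ ![A, B, C])
    (hO : IsCenterOf O {p | qval c p = 0})
    (hA : qval c A = 0) (hB : qval c B = 0) (hC : qval c C = 0) : qdiff c O = 0 := by
  have hmid (p : Pt) : midpoint ℝ p ((2 : ℝ) • O - p) = O := by
    rw [midpoint_eq_inv_two_smul]
    module
  have hconst {p : Pt} (hp : qval c p = 0) : qdiff c O p = qdiff c O O := by
    have hp' : qval c ((2 : ℝ) • O - p) = 0 := hO p hp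
    have h := qval_sub_qval c p ((2 : ℝ) • O - p)
    rw [hmid, hp, hp', map_sub, map_sub, map_smul, smul_eq_mul] at h
    linear_combination -h / 2
  exact eq_zero_of_apply_sub_eq_zero (by simp) hABC
    (by rw [map_sub, hconst hA, hconst hB, sub_self])
    (by rw [map_sub, hconst hA, hconst hC, sub_self])

theorem qval_eq_of_conjugate_diameter {s t : ℝ} (hO : qdiff c O = 0) (hBC : qval c B = qval c C)
    (hmid : midpoint ℝ A Y = AffineMap.lineMap O (midpoint ℝ B C) t)
    (hdir : A - Y = s • (B - C)) : qval c A = qval c Y := by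
  have hconj : qdiff c (midpoint ℝ B C) (B - C) = 0 := by
    rw [← qval_sub_qval, hBC, sub_self]
  rw [← sub_eq_zero, qval_sub_qval, hmid, hdir, qdiff_lineMap, hO]
  simp [hconj]

theorem IsConic.image_homoth {r : ℝ} (hr : r ≠ 0) (hS : IsConic S) (Z : Pt) :
    IsConic (homoth Z r '' S) := by
  obtain ⟨c, hc, rfl⟩ := hS
  have hinv (p : Pt) : homoth Z r⁻¹ p = r⁻¹ • p + (1 - r⁻¹) • Z := by
    unfold homoth
    module
  set w := (1 - r⁻¹) • Z
  refine ⟨![r⁻¹ ^ 2 * c 0, r⁻¹ ^ 2 * c 1, r⁻¹ ^ 2 * c 2, r⁻¹ * (qgrad c w).1,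
    r⁻¹ * (qgrad c w).2, qval c w], by simpa [hr] using hc, ?_⟩
  rw [Set.image_eq_preimage_of_inverse (leftInverse_homoth_inv Z hr)
    (fun X => by simpa only [inv_inv] using leftInverse_homoth_inv Z (inv_ne_zero hr) X)]
  ext p
  have hval : qval c (homoth Z r⁻¹ p) = qval ![r⁻¹ ^ 2 * c 0, r⁻¹ ^ 2 * c 1, r⁻¹ ^ 2 * c 2,
      r⁻¹ * (qgrad c w).1, r⁻¹ * (qgrad c w).2, qval c w] p := by
    rw [hinv]
    simp only [qval, qgrad, Prod.fst_add, Prod.snd_add, Prod.smul_fst, Prod.smul_snd, smul_eq_mul,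
      Matrix.cons_val_zero, Matrix.cons_val_one, Matrix.cons_val]
    ring
  rw [Set.mem_preimage, Set.mem_ofPred_eq, Set.mem_ofPred_eq, hval]

theorem IsCenterOf.image_homoth (hO : IsCenterOf O S) (Z : Pt) (r : ℝ) :
    IsCenterOf (homoth Z r O) (homoth Z r '' S) := by
  rintro _ ⟨X, hX, rfl⟩
  refine ⟨_, hO X hX, ?_⟩
  unfold homoth
  module

theorem IsCenterOf.image_homoth_neg {r : ℝ} (hO : IsCenterOf O S)
    (hZ : (1 + r) • Z = (1 - r) • Y + (2 * r) • O) :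
    homoth Z (-r) '' S = homoth Y r '' S := by
  have hmap (X : Pt) : homoth Z (-r) X = homoth Y r ((2 : ℝ) • O - X) := by
    calc homoth Z (-r) X = (1 + r) • Z - r • X := by unfold homoth; module
      _ = _ := by rw [hZ]; unfold homoth; module
  ext p
  constructor
  · rintro ⟨X, hX, rfl⟩
    exact ⟨_, hO X hX, (hmap X).symm⟩
  · rintro ⟨X, hX, rfl⟩
    exact ⟨_, hO X hX, by rw [hmap, sub_sub_cancel]⟩

end Conic

section NinePoints

variable {A B C O H X : Pt} {S : Set Pt}

theorem midpoint_mem_image_complement (hA : A ∈ S) :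
    midpoint ℝ B C ∈ homoth (cent A B C) (-(1 / 2)) '' S :=
  ⟨A, hA, by rw [homoth_cent_neg_half, midpoint_eq_inv_two_smul]; module⟩

theorem midpoint_anticomplement_mem_image_complement (hO : IsCenterOf O S) (hA : A ∈ S) :
    midpoint ℝ A (homoth (cent A B C) (-2) O) ∈ homoth (cent A B C) (-(1 / 2)) '' S := by
  refine ⟨_, hO A hA, ?_⟩
  rw [homoth_cent_neg_half, midpoint_eq_inv_two_smul, homoth_cent_neg_two]
  module

theorem foot_mem_image_complement (hABC : AffineIndependent ℝ ![A, B, C])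
    (hS : IsConic S) (hA : A ∈ S) (hB : B ∈ S) (hC : C ∈ S) (hO : IsCenterOf O S)
    (hH : H = homoth (cent A B C) (-2) O) (hHA : H ≠ A)
    (hAHX : Collinear ℝ {A, H, X}) (hBCX : Collinear ℝ {B, C, X}) :
    X ∈ homoth (cent A B C) (-(1 / 2)) '' S := by
  obtain ⟨c, -, rfl⟩ := hS
  have hBC : B ≠ C := hABC.injective.ne (by decide : (1 : Fin 3) ≠ 2)
  obtain ⟨t, ht⟩ := exists_lineMap_eq_of_collinear hAHX hHA.symm
  obtain ⟨r, hr⟩ := exists_lineMap_eq_of_collinear hBCX hBC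
  rw [hH, homoth_cent_neg_two, AffineMap.lineMap_apply_module'] at ht
  rw [AffineMap.lineMap_apply_module'] at hr
  set Y := A + B + C - (2 : ℝ) • X with hY
  have hmid : midpoint ℝ A Y = AffineMap.lineMap O (midpoint ℝ B C) (1 - 2 * t) := by
    rw [hY, ← ht, AffineMap.lineMap_apply_module, midpoint_eq_inv_two_smul,
      midpoint_eq_inv_two_smul]
    module
  have hdir : A - Y = (1 - 2 * r) • (B - C) := by
    rw [hY, ← hr]
    module
  have hYS : qval c A = qval c Y := qval_eq_of_conjugate_diameter
    (qdiff_center_eq_zero hABC hO hA hB hC) (hB.trans hC.symm) hmid hdir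
  refine ⟨Y, hYS.symm.trans hA, ?_⟩
  rw [homoth_cent_neg_half, hY]
  module

end NinePoints

theorem complement_of_circumconic_is_nine_point_conic_general
    (A B C O H : Pt) (hABC : AffineIndependent ℝ ![A, B, C])
    (hH : H = homoth (cent A B C) (-2) O)
    (hOm1 : O ≠ midpoint ℝ B C) (hOm2 : O ≠ midpoint ℝ C A) (hOm3 : O ≠ midpoint ℝ A B)
    (H₁ H₂ H₃ : Pt)
    (hH₁ : Collinear ℝ {A, H, H₁} ∧ Collinear ℝ {B, C, H₁})
    (hH₂ : Collinear ℝ {B, H, H₂} ∧ Collinear ℝ {A, C, H₂})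
    (hH₃ : Collinear ℝ {C, H, H₃} ∧ Collinear ℝ {A, B, H₃})
    (CO : Set Pt)
    (hCO : IsConic CO) (hACO : A ∈ CO) (hBCO : B ∈ CO) (hCCO : C ∈ CO)
    (hOcen : IsCenterOf O CO) :
    (H ≠ A ∧ H ≠ B ∧ H ≠ C) ∧
    IsConic (homoth (cent A B C) (-(1 / 2)) '' CO) ∧
    midpoint ℝ B C ∈ homoth (cent A B C) (-(1 / 2)) '' CO ∧
    midpoint ℝ C A ∈ homoth (cent A B C) (-(1 / 2)) '' CO ∧
    midpoint ℝ A B ∈ homoth (cent A B C) (-(1 / 2)) '' CO ∧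
    midpoint ℝ A H ∈ homoth (cent A B C) (-(1 / 2)) '' CO ∧
    midpoint ℝ B H ∈ homoth (cent A B C) (-(1 / 2)) '' CO ∧
    midpoint ℝ C H ∈ homoth (cent A B C) (-(1 / 2)) '' CO ∧
    H₁ ∈ homoth (cent A B C) (-(1 / 2)) '' CO ∧
    H₂ ∈ homoth (cent A B C) (-(1 / 2)) '' CO ∧
    H₃ ∈ homoth (cent A B C) (-(1 / 2)) '' CO ∧
    homoth (cent A B C) (-(1 / 2)) '' CO = homoth H (1 / 2) '' CO ∧
    IsCenterOf (midpoint ℝ H O) (homoth (cent A B C) (-(1 / 2)) '' CO) := by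
  have hBCA : cent B C A = cent A B C := cent_rotate
  have hCAB : cent C A B = cent A B C := cent_rotate.symm
  have hH_B : H = homoth (cent B C A) (-2) O := hBCA ▸ hH
  have hH_C : H = homoth (cent C A B) (-2) O := hCAB ▸ hH
  have hHA : H ≠ A := hH ▸ mt homoth_cent_neg_two_eq_left_iff.1 hOm1
  have hHB : H ≠ B := hH_B ▸ mt homoth_cent_neg_two_eq_left_iff.1 hOm2
  have hHC : H ≠ C := hH_C ▸ mt homoth_cent_neg_two_eq_left_iff.1 hOm3
  refine ⟨⟨hHA, hHB, hHC⟩, hCO.image_homoth (by norm_num) _,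
    midpoint_mem_image_complement hACO,
    hBCA ▸ midpoint_mem_image_complement hBCO,
    hCAB ▸ midpoint_mem_image_complement hCCO,
    hH ▸ midpoint_anticomplement_mem_image_complement hOcen hACO,
    hBCA ▸ hH_B ▸ midpoint_anticomplement_mem_image_complement hOcen hBCO,
    hCAB ▸ hH_C ▸ midpoint_anticomplement_mem_image_complement hOcen hCCO,
    foot_mem_image_complement hABC hCO hACO hBCO hCCO hOcen hH hHA hH₁.1 hH₁.2,
    hBCA ▸ foot_mem_image_complement hABC.comm_left.comm_right hCO hBCO hCCO hACO hOcen hH_B hHB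
      hH₂.1 (by rw [Set.insert_comm]; exact hH₂.2),
    hCAB ▸ foot_mem_image_complement hABC.comm_right.comm_left hCO hCCO hACO hBCO hOcen hH_C hHC
      hH₃.1 hH₃.2,
    hOcen.image_homoth_neg (by rw [hH]; unfold homoth; module), ?_⟩
  rw [hH, ← homoth_neg_half_eq_midpoint]
  exact hOcen.image_homoth _ _

theorem complement_of_circumconic_is_nine_point_conic
    (A B C P P' Q Q' D E F D₃ E₃ F₃ : Pt) (x y z : ℝ)
    (hABC : AffineIndependent ℝ ![A, B, C])
    (hsum : x + y + z = 1)
    (hPco : P = x • A + y • B + z • C)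
    (hx0 : x ≠ 0) (hy0 : y ≠ 0) (hz0 : z ≠ 0)
    (hx1 : x ≠ 1) (hy1 : y ≠ 1) (hz1 : z ≠ 1)
    (hst : x * y + y * z + z * x ≠ 0)
    (hP' : P' = (y * z / (x * y + y * z + z * x)) • A
        + (x * z / (x * y + y * z + z * x)) • B
        + (x * y / (x * y + y * z + z * x)) • C)
    (hQ : Q = homoth (cent A B C) (-(1 / 2)) P')
    (hQ' : Q' = homoth (cent A B C) (-(1 / 2)) P)
    (hD : Collinear ℝ {A, P, D} ∧ Collinear ℝ {B, C, D})
    (hE : Collinear ℝ {B, P, E} ∧ Collinear ℝ {A, C, E})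
    (hF : Collinear ℝ {C, P, F} ∧ Collinear ℝ {A, B, F})
    (hD₃ : Collinear ℝ {A, P', D₃} ∧ Collinear ℝ {B, C, D₃})
    (hE₃ : Collinear ℝ {B, P', E₃} ∧ Collinear ℝ {A, C, E₃})
    (hF₃ : Collinear ℝ {C, P', F₃} ∧ Collinear ℝ {A, B, F₃})
    (O H : Pt)
    (hO : Par (midpoint ℝ B C - O) (D - Q) ∧ Par (midpoint ℝ C A - O) (E - Q) ∧
          Par (midpoint ℝ A B - O) (F - Q))
    (hH : Par (H - A) (D - Q) ∧ Par (H - B) (E - Q) ∧ Par (H - C) (F - Q))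
    (hOm1 : O ≠ midpoint ℝ B C) (hOm2 : O ≠ midpoint ℝ C A) (hOm3 : O ≠ midpoint ℝ A B)
    (H₁ H₂ H₃ : Pt)
    (hH₁ : Collinear ℝ {A, H, H₁} ∧ Collinear ℝ {B, C, H₁})
    (hH₂ : Collinear ℝ {B, H, H₂} ∧ Collinear ℝ {A, C, H₂})
    (hH₃ : Collinear ℝ {C, H, H₃} ∧ Collinear ℝ {A, B, H₃})
    (CO : Set Pt)
    (hCO : IsConic CO) (hACO : A ∈ CO) (hBCO : B ∈ CO) (hCCO : C ∈ CO)
    (hOcen : IsCenterOf O CO)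
    (hCOuniq : ∀ S : Set Pt, IsConic S → A ∈ S → B ∈ S → C ∈ S → IsCenterOf O S → S = CO) :
    (H ≠ A ∧ H ≠ B ∧ H ≠ C) ∧
    IsConic (homoth (cent A B C) (-(1 / 2)) '' CO) ∧
    midpoint ℝ B C ∈ homoth (cent A B C) (-(1 / 2)) '' CO ∧
    midpoint ℝ C A ∈ homoth (cent A B C) (-(1 / 2)) '' CO ∧
    midpoint ℝ A B ∈ homoth (cent A B C) (-(1 / 2)) '' CO ∧
    midpoint ℝ A H ∈ homoth (cent A B C) (-(1 / 2)) '' CO ∧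
    midpoint ℝ B H ∈ homoth (cent A B C) (-(1 / 2)) '' CO ∧
    midpoint ℝ C H ∈ homoth (cent A B C) (-(1 / 2)) '' CO ∧
    H₁ ∈ homoth (cent A B C) (-(1 / 2)) '' CO ∧
    H₂ ∈ homoth (cent A B C) (-(1 / 2)) '' CO ∧
    H₃ ∈ homoth (cent A B C) (-(1 / 2)) '' CO ∧
    homoth (cent A B C) (-(1 / 2)) '' CO = homoth H (1 / 2) '' CO ∧
    IsCenterOf (midpoint ℝ H O) (homoth (cent A B C) (-(1 / 2)) '' CO) := by
  exact complement_of_circumconic_is_nine_point_conic_general A B C O H hABC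
    (generalizedOrthocenter_eq hABC hsum hPco hx0 hy0 hz0 hx1 hy1 hst hP' hQ hD hE
      hO.1 hO.2.1 hH.1 hH.2.1)
    hOm1 hOm2 hOm3 H₁ H₂ H₃ hH₁ hH₂ hH₃ CO hCO hACO hBCO hCCO hOcen
end
end

section
/- Assume P does not lie on a median of ABC (a line joining a vertex to the midpoint of the opposite side). Then T_P(K⁻¹(Z)) = Z, where Z is the center of the conic C_P through A, B, C, P, Q. -/
noncomputable section

/-! Let `P` have barycentric coordinates `(x : y : z)`. The circumconics are the curves
`α v w + β w u + γ u v = 0`, and the two conditions imposed by `P` and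
`Q = (x (y + z) : y (z + x) : z (x + y))` determine
`(α : β : γ) = (x (z² - y²) : y (x² - z²) : z (y² - x²))`. The center is the pole of the line at
infinity, which simplifies to `Z = (x (y - z)² : y (z - x)² : z (x - y)²)`, and therefore
`K⁻¹ Z = ((y + z) (x - y) (x - z) : (z + x) (y - z) (y - x) : (x + y) (z - x) (z - y))`. The factor
`y + z` is the one occurring in `(y + z) D = y B + z C`, so the map `T_P` sends `K⁻¹ Z` to the point
whose first coordinate is `x ((y - z) (y - x) + (z - x) (z - y)) = x (y - z)²`. -/

section Affine

variable {k V : Type*}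

theorem affineMap_apply_combination [Ring k] [AddCommGroup V] [Module k V] {W : Type*}
    [AddCommGroup W] [Module k W] (f : V →ᵃ[k] W) (A B C : V) {u v w : k} (h : u + v + w = 1) :
    f (u • A + v • B + w • C) = u • f A + v • f B + w • f C := by
  have hconst : f 0 = u • f 0 + v • f 0 + w • f 0 := by rw [← add_smul, ← add_smul, h, one_smul]
  rw [f.decomp]
  simp only [Pi.add_apply, map_add, map_smul, smul_add]
  nth_rw 1 [hconst]
  abel

theorem one_sub_coord_smul_trace [Field k] [AddCommGroup V] [Module k V] {ι : Type*}
    (b : AffineBasis ι k V) {i j l : ι} (hij : i ≠ j) (hil : i ≠ l) (hjl : j ≠ l) {X D : V}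
    (hcevian : Collinear k {b i, X, D}) (hside : Collinear k {b j, b l, D}) :
    (1 - b.coord i X) • D = X - b.coord i X • b i := by
  obtain rfl | hX := eq_or_ne X (b i)
  · simp
  have hside_mem : D ∈ line[k, b j, b l] :=
    hside.mem_affineSpan_of_mem_of_ne (by simp) (by simp) (by simp) (b.ind.injective.ne hjl)
  have hcevian_mem : D ∈ line[k, b i, X] :=
    hcevian.mem_affineSpan_of_mem_of_ne (by simp) (by simp) (by simp) hX.symm
  rw [mem_affineSpan_pair_iff_exists_lineMap_eq] at hside_mem hcevian_mem
  obtain ⟨r, hr⟩ := hside_mem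
  obtain ⟨t, ht⟩ := hcevian_mem
  have hDi : b.coord i D = 0 := by
    rw [← hr, AffineMap.apply_lineMap, b.coord_apply_ne hij, b.coord_apply_ne hil,
      AffineMap.lineMap_same_apply]
  have hcoord : t * (1 - b.coord i X) = 1 := by
    rw [← ht, AffineMap.apply_lineMap, b.coord_apply_eq, AffineMap.lineMap_apply_ring'] at hDi
    linear_combination -hDi
  rw [← ht, AffineMap.lineMap_apply_module]
  linear_combination (norm := module) hcoord • (X - b i)

end Affine

section Triangle

variable {A B C : Pt}

/-- The vertices of a nondegenerate triangle as an affine basis of the plane, whose coordinate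
functions are the normalized barycentric coordinates. -/
def triangleBasis (h : AffineIndependent ℝ ![A, B, C]) : AffineBasis (Fin 3) ℝ Pt :=
  ⟨![A, B, C], h, h.affineSpan_eq_top_iff_card_eq_finrank_add_one.2 (by simp)⟩

theorem triangleBasis_coord (h : AffineIndependent ℝ ![A, B, C]) {u v w : ℝ}
    (hsum : u + v + w = 1) (i : Fin 3) :
    (triangleBasis h).coord i (u • A + v • B + w • C) = ![u, v, w] i := by
  change (triangleBasis h).coord i
    (u • triangleBasis h 0 + v • triangleBasis h 1 + w • triangleBasis h 2) = _
  rw [affineMap_apply_combination _ _ _ _ hsum]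
  fin_cases i <;> simp

theorem exists_eq_combination (h : AffineIndependent ℝ ![A, B, C]) (Z : Pt) :
    ∃ u v w : ℝ, u + v + w = 1 ∧ Z = u • A + v • B + w • C := by
  let b := triangleBasis h
  refine ⟨b.coord 0 Z, b.coord 1 Z, b.coord 2 Z, ?_, ?_⟩
  · rw [← Fin.sum_univ_three (b.coord · Z), b.sum_coord_apply_eq_one]
  · exact (b.linear_combination_coord_eq_self Z).symm.trans (Fin.sum_univ_three _)

theorem combination_eq_cent_iff (h : AffineIndependent ℝ ![A, B, C]) {x y z : ℝ}
    (hsum : x + y + z = 1) : x • A + y • B + z • C = cent A B C ↔ x = y ∧ y = z := by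
  have hcent : cent A B C = (3⁻¹ : ℝ) • A + (3⁻¹ : ℝ) • B + (3⁻¹ : ℝ) • C := by
    rw [cent, smul_add, smul_add]
  rw [hcent]
  constructor
  · intro heq
    have hcoord (i : Fin 3) : ![x, y, z] i = ![(3⁻¹ : ℝ), 3⁻¹, 3⁻¹] i := by
      rw [← triangleBasis_coord h hsum, heq, triangleBasis_coord h (by norm_num)]
    exact ⟨(hcoord 0).trans (hcoord 1).symm, (hcoord 1).trans (hcoord 2).symm⟩
  · rintro ⟨rfl, rfl⟩
    obtain rfl : x = 3⁻¹ := by linarith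
    rfl

theorem smul_traces_eq (h : AffineIndependent ℝ ![A, B, C]) {x y z : ℝ} (hsum : x + y + z = 1)
    {D E F : Pt}
    (hAD : Collinear ℝ {A, x • A + y • B + z • C, D}) (hBC : Collinear ℝ {B, C, D})
    (hBE : Collinear ℝ {B, x • A + y • B + z • C, E}) (hAC : Collinear ℝ {A, C, E})
    (hCF : Collinear ℝ {C, x • A + y • B + z • C, F}) (hAB : Collinear ℝ {A, B, F}) :
    (y + z) • D = y • B + z • C ∧ (z + x) • E = z • C + x • A ∧ (x + y) • F = x • A + y • B := by
  have hD := one_sub_coord_smul_trace (triangleBasis h) (i := 0) (j := 1) (l := 2)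
    (by decide) (by decide) (by decide) hAD hBC
  have hE := one_sub_coord_smul_trace (triangleBasis h) (i := 1) (j := 0) (l := 2)
    (by decide) (by decide) (by decide) hBE hAC
  have hF := one_sub_coord_smul_trace (triangleBasis h) (i := 2) (j := 0) (l := 1)
    (by decide) (by decide) (by decide) hCF hAB
  rw [triangleBasis_coord h hsum] at hD hE hF
  change (1 - x) • D = x • A + y • B + z • C - x • A at hD
  change (1 - y) • E = x • A + y • B + z • C - y • B at hE
  change (1 - z) • F = x • A + y • B + z • C - z • C at hF
  refine ⟨?_, ?_, ?_⟩
  · rw [show y + z = 1 - x by linarith, hD]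
    abel
  · rw [show z + x = 1 - y by linarith, hE]
    abel
  · rw [show x + y = 1 - z by linarith, hF]
    abel

theorem homoth_cent (A B C : Pt) (r u v w : ℝ) :
    homoth (cent A B C) r (u • A + v • B + w • C) =
      ((1 - r) / 3 + r * u) • A + ((1 - r) / 3 + r * v) • B + ((1 - r) / 3 + r * w) • C := by
  rw [homoth, cent]
  module

theorem isotomcomplement_eq (A B C : Pt) {x y z σ : ℝ} (hσ : σ = x * y + y * z + z * x)
    (hσ0 : σ ≠ 0) :
    homoth (cent A B C) (-(1 / 2)) ((y * z / σ) • A + (x * z / σ) • B + (x * y / σ) • C) =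
      (x * (y + z) / (2 * σ)) • A + (y * (z + x) / (2 * σ)) • B + (z * (x + y) / (2 * σ)) • C := by
  rw [homoth_cent]
  congr 3 <;> field_simp <;> linear_combination 3 * hσ

end Triangle

section PoleAtInfinity

/-- `(u, v, w)` is a barycentric triple of the center of the circumconic
`α v w + β w u + γ u v = 0`: the three partial derivatives of the left-hand side agree there, that
is, the polar line of the point is the line at infinity `u + v + w = 0`. -/
def IsPoleAtInfinity {R : Type*} [CommRing R] (α β γ u v w : R) : Prop :=
  β * w + γ * v = γ * u + α * w ∧ γ * u + α * w = α * v + β * u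

namespace IsPoleAtInfinity

variable {R : Type*} [CommRing R] {α β γ u v w : R}

theorem rotate (h : IsPoleAtInfinity α β γ u v w) : IsPoleAtInfinity β γ α v w u :=
  ⟨h.2, (h.1.trans h.2).symm⟩

theorem const_mul (h : IsPoleAtInfinity α β γ u v w) (t : R) :
    IsPoleAtInfinity (t * α) (t * β) (t * γ) u v w :=
  ⟨by linear_combination t * h.1, by linear_combination t * h.2⟩

theorem mul_coord_eq (h : IsPoleAtInfinity α β γ u v w) (hsum : u + v + w = 1) :
    (α * (β + γ - α) + β * (γ + α - β) + γ * (α + β - γ)) * u = α * (β + γ - α) := by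
  linear_combination (-2 * α) * h.1 + (β - α - γ) * h.2 + α * (β + γ - α) * hsum

end IsPoleAtInfinity

end PoleAtInfinity

section CircumconicCoefficients

variable {K : Type*} [Field K]

open Matrix in
theorem exists_smul_eq_cross_of_dotProduct_eq_zero {n p q : Fin 3 → K} (hn : n ≠ 0)
    (hp : n ⬝ᵥ p = 0) (hq : n ⬝ᵥ q = 0) : ∃ t : K, t • n = p ⨯₃ q := by
  have hcross : n ⨯₃ (p ⨯₃ q) = 0 := by
    rw [cross_cross_eq_smul_sub_smul', dotProduct_comm p, hp, hq, zero_smul, zero_smul, sub_zero]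
  by_contra! hne
  exact crossProduct_ne_zero_iff_linearIndependent.2 ((LinearIndependent.pair_iff' hn).2 hne) hcross

theorem circumconic_coeffs {α β γ x y z : K} (hx : x ≠ 0) (hy : y ≠ 0) (hz : z ≠ 0)
    (hne : ¬(α = 0 ∧ β = 0 ∧ γ = 0))
    (hP : α * (y * z) + β * (z * x) + γ * (x * y) = 0)
    (hQ : α * (y * (z + x) * (z * (x + y))) + β * (z * (x + y) * (x * (y + z)))
      + γ * (x * (y + z) * (y * (z + x))) = 0) :
    ∃ t : K, t * α = x * (z ^ 2 - y ^ 2) ∧ t * β = y * (x ^ 2 - z ^ 2) ∧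
      t * γ = z * (y ^ 2 - x ^ 2) := by
  obtain ⟨t, ht⟩ := exists_smul_eq_cross_of_dotProduct_eq_zero
    (n := ![α, β, γ]) (p := ![y * z, z * x, x * y])
    (q := ![y * (z + x) * (z * (x + y)), z * (x + y) * (x * (y + z)), x * (y + z) * (y * (z + x))])
    (fun h => hne ⟨congrFun h 0, congrFun h 1, congrFun h 2⟩)
    (by simpa [Matrix.vec3_dotProduct, ← add_assoc] using hP)
    (by simpa [Matrix.vec3_dotProduct, ← add_assoc] using hQ)
  have h₀ := congrFun ht 0
  have h₁ := congrFun ht 1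
  have h₂ := congrFun ht 2
  simp only [Pi.smul_apply, smul_eq_mul, cross_apply, Matrix.cons_val] at h₀ h₁ h₂
  refine ⟨t / (x * y * z), ?_, ?_, ?_⟩ <;> field_simp
  · linear_combination h₀
  · linear_combination h₁
  · linear_combination h₂

theorem pole_coords {x y z u v w s : K} (hyz : y + z ≠ 0) (hzx : z + x ≠ 0) (hxy : x + y ≠ 0)
    (hs : s = x * (y - z) ^ 2 + y * (z - x) ^ 2 + z * (x - y) ^ 2) (hsum : u + v + w = 1)
    (h : IsPoleAtInfinity (x * (z ^ 2 - y ^ 2)) (y * (x ^ 2 - z ^ 2)) (z * (y ^ 2 - x ^ 2)) u v w) :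
    s * u = x * (y - z) ^ 2 ∧ s * v = y * (z - x) ^ 2 ∧ s * w = z * (x - y) ^ 2 := by
  have hne : (y + z) * (z + x) * (x + y) ≠ 0 := mul_ne_zero (mul_ne_zero hyz hzx) hxy
  have hu := h.mul_coord_eq hsum
  have hv := h.rotate.mul_coord_eq (by linear_combination hsum)
  have hw := h.rotate.rotate.mul_coord_eq (by linear_combination hsum)
  refine ⟨mul_left_cancel₀ hne ?_, mul_left_cancel₀ hne ?_, mul_left_cancel₀ hne ?_⟩
  · linear_combination (y + z) * (z + x) * (x + y) * u * hs - hu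
  · linear_combination (y + z) * (z + x) * (x + y) * v * hs - hv
  · linear_combination (y + z) * (z + x) * (x + y) * w * hs - hw

theorem pole_weight_ne_zero {x y z u v s : K} (hx : x ≠ 0) (hy : y ≠ 0) (hne : ¬(x = y ∧ y = z))
    (hu : s * u = x * (y - z) ^ 2) (hv : s * v = y * (z - x) ^ 2) : s ≠ 0 := by
  rintro rfl
  rw [zero_mul, zero_eq_mul, or_iff_right hx, sq_eq_zero_iff, sub_eq_zero] at hu
  rw [zero_mul, zero_eq_mul, or_iff_right hy, sq_eq_zero_iff, sub_eq_zero] at hv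
  exact hne ⟨(hu.trans hv).symm, hu⟩

theorem smul_traces_combination_eq_smul {V : Type*} [AddCommGroup V] [Module K V]
    {A B C D E F : V} {x y z u v w s : K}
    (hs : s = x * (y - z) ^ 2 + y * (z - x) ^ 2 + z * (x - y) ^ 2)
    (hu : s * u = x * (y - z) ^ 2) (hv : s * v = y * (z - x) ^ 2) (hw : s * w = z * (x - y) ^ 2)
    (hD : (y + z) • D = y • B + z • C) (hE : (z + x) • E = z • C + x • A)
    (hF : (x + y) • F = x • A + y • B) :
    s • ((1 - 2 * u) • D + (1 - 2 * v) • E + (1 - 2 * w) • F) = s • (u • A + v • B + w • C) := by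
  have hu' : s * (1 - 2 * u) = (x - y) * (x - z) * (y + z) := by linear_combination hs - 2 * hu
  have hv' : s * (1 - 2 * v) = (y - z) * (y - x) * (z + x) := by linear_combination hs - 2 * hv
  have hw' : s * (1 - 2 * w) = (z - x) * (z - y) * (x + y) := by linear_combination hs - 2 * hw
  simp only [smul_add, smul_smul, hu', hv', hw', hu, hv, hw]
  simp only [mul_smul _ (_ + _), hD, hE, hF]
  module

end CircumconicCoefficients

section Conic

variable {c : Fin 6 → ℝ} {A B C : Pt}

/-- The homogeneous quadratic part of the polynomial with coefficient vector `c`. Its values on the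
sides of the triangle are the coefficients of the barycentric equation of a circumconic. -/
def qform (c : Fin 6 → ℝ) (d : Pt) : ℝ :=
  c 0 * d.1 ^ 2 + c 1 * d.1 * d.2 + c 2 * d.2 ^ 2

theorem qval_combination (c : Fin 6 → ℝ) (A B C : Pt) {u v w : ℝ} (h : u + v + w = 1) :
    qval c (u • A + v • B + w • C) = u * qval c A + v * qval c B + w * qval c C
      - (qform c (B - C) * (v * w) + qform c (C - A) * (w * u) + qform c (A - B) * (u * v)) := by
  obtain rfl : u = 1 - v - w := by linarith
  simp only [qval, qform, Prod.fst_add, Prod.snd_add, Prod.smul_fst, Prod.smul_snd, Prod.fst_sub,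
    Prod.snd_sub, smul_eq_mul]
  ring

theorem qval_combination_eq_zero_iff (hA : qval c A = 0) (hB : qval c B = 0) (hC : qval c C = 0)
    {u v w : ℝ} (h : u + v + w = 1) :
    qval c (u • A + v • B + w • C) = 0 ↔
      qform c (B - C) * (v * w) + qform c (C - A) * (w * u) + qform c (A - B) * (u * v) = 0 := by
  rw [qval_combination c A B C h, hA, hB, hC, mul_zero, mul_zero, mul_zero, add_zero, add_zero,
    zero_sub, neg_eq_zero]

theorem quadratic_coeffs_eq_zero_of_forall_qval_eq_zero (h : ∀ p, qval c p = 0) :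
    c 0 = 0 ∧ c 1 = 0 ∧ c 2 = 0 := by
  simp only [qval, Prod.forall] at h
  have h₀₀ := h 0 0
  have h₁₀ := h 1 0
  have h₀₁ := h 0 1
  have h₁₁ := h 1 1
  have h₂₀ := h (-1) 0
  have h₀₂ := h 0 (-1)
  norm_num at h₀₀ h₁₀ h₀₁ h₁₁ h₂₀ h₀₂
  refine ⟨?_, ?_, ?_⟩ <;> linarith

theorem not_qform_sides_eq_zero (hABC : AffineIndependent ℝ ![A, B, C])
    (hc : ¬(c 0 = 0 ∧ c 1 = 0 ∧ c 2 = 0))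
    (hA : qval c A = 0) (hB : qval c B = 0) (hC : qval c C = 0) :
    ¬(qform c (B - C) = 0 ∧ qform c (C - A) = 0 ∧ qform c (A - B) = 0) := by
  rintro ⟨hα, hβ, hγ⟩
  refine hc (quadratic_coeffs_eq_zero_of_forall_qval_eq_zero fun p => ?_)
  obtain ⟨u, v, w, hsum, rfl⟩ := exists_eq_combination hABC p
  rw [qval_combination_eq_zero_iff hA hB hC hsum, hα, hβ, hγ]
  ring

theorem IsCenterOf.isPoleAtInfinity {u v w : ℝ} (hsum : u + v + w = 1)
    (hZ : IsCenterOf (u • A + v • B + w • C) {p | qval c p = 0})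
    (hA : qval c A = 0) (hB : qval c B = 0) (hC : qval c C = 0) :
    IsPoleAtInfinity (qform c (B - C)) (qform c (C - A)) (qform c (A - B)) u v w := by
  have hrefl {r s t : ℝ} (hrst : r + s + t = 1) (hmem : qval c (r • A + s • B + t • C) = 0) :
      qform c (B - C) * ((2 * v - s) * (2 * w - t)) + qform c (C - A) * ((2 * w - t) * (2 * u - r))
        + qform c (A - B) * ((2 * u - r) * (2 * v - s)) = 0 := by
    have hsub : (2 : ℝ) • (u • A + v • B + w • C) - (r • A + s • B + t • C) =
        (2 * u - r) • A + (2 * v - s) • B + (2 * w - t) • C := by module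
    rw [← qval_combination_eq_zero_iff hA hB hC (by linarith), ← hsub]
    exact hZ _ hmem
  -- The reflected vertices lie on the conic, so every partial derivative equals twice the value of
  -- the form at the center.
  have hA' := hrefl (r := 1) (s := 0) (t := 0) (by norm_num) (by simpa using hA)
  have hB' := hrefl (r := 0) (s := 1) (t := 0) (by norm_num) (by simpa using hB)
  have hC' := hrefl (r := 0) (s := 0) (t := 1) (by norm_num) (by simpa using hC)
  constructor
  · linear_combination (hB' - hA') / 2
  · linear_combination (hC' - hB') / 2

theorem exists_mul_qform_sides_eq (hABC : AffineIndependent ℝ ![A, B, C])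
    (hc : ¬(c 0 = 0 ∧ c 1 = 0 ∧ c 2 = 0))
    (hA : qval c A = 0) (hB : qval c B = 0) (hC : qval c C = 0) {x y z σ : ℝ}
    (hsum : x + y + z = 1) (hx : x ≠ 0) (hy : y ≠ 0) (hz : z ≠ 0)
    (hσ : σ = x * y + y * z + z * x) (hσ0 : σ ≠ 0)
    (hP : qval c (x • A + y • B + z • C) = 0)
    (hQ : qval c ((x * (y + z) / (2 * σ)) • A + (y * (z + x) / (2 * σ)) • B
      + (z * (x + y) / (2 * σ)) • C) = 0) :
    ∃ t : ℝ, t * qform c (B - C) = x * (z ^ 2 - y ^ 2) ∧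
      t * qform c (C - A) = y * (x ^ 2 - z ^ 2) ∧ t * qform c (A - B) = z * (y ^ 2 - x ^ 2) := by
  have hsumQ : x * (y + z) / (2 * σ) + y * (z + x) / (2 * σ) + z * (x + y) / (2 * σ) = 1 := by
    field_simp
    linear_combination -2 * hσ
  rw [qval_combination_eq_zero_iff hA hB hC hsum] at hP
  rw [qval_combination_eq_zero_iff hA hB hC hsumQ] at hQ
  refine circumconic_coeffs hx hy hz (not_qform_sides_eq_zero hABC hc hA hB hC) hP ?_
  field_simp at hQ
  linear_combination hQ

theorem center_coords (hABC : AffineIndependent ℝ ![A, B, C])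
    (hc : ¬(c 0 = 0 ∧ c 1 = 0 ∧ c 2 = 0))
    (hA : qval c A = 0) (hB : qval c B = 0) (hC : qval c C = 0) {x y z σ : ℝ}
    (hsum : x + y + z = 1) (hx : x ≠ 0) (hy : y ≠ 0) (hz : z ≠ 0)
    (hx1 : x ≠ 1) (hy1 : y ≠ 1) (hz1 : z ≠ 1)
    (hσ : σ = x * y + y * z + z * x) (hσ0 : σ ≠ 0)
    (hP : qval c (x • A + y • B + z • C) = 0)
    (hQ : qval c ((x * (y + z) / (2 * σ)) • A + (y * (z + x) / (2 * σ)) • B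
      + (z * (x + y) / (2 * σ)) • C) = 0)
    {u v w s : ℝ} (huvw : u + v + w = 1)
    (hs : s = x * (y - z) ^ 2 + y * (z - x) ^ 2 + z * (x - y) ^ 2)
    (hZ : IsCenterOf (u • A + v • B + w • C) {p | qval c p = 0}) :
    s * u = x * (y - z) ^ 2 ∧ s * v = y * (z - x) ^ 2 ∧ s * w = z * (x - y) ^ 2 := by
  obtain ⟨t, hα, hβ, hγ⟩ := exists_mul_qform_sides_eq hABC hc hA hB hC hsum hx hy hz hσ hσ0 hP hQ
  have hpole := (hZ.isPoleAtInfinity huvw hA hB hC).const_mul t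
  rw [hα, hβ, hγ] at hpole
  exact pole_coords (fun h => hx1 (by linarith)) (fun h => hy1 (by linarith))
    (fun h => hz1 (by linarith)) hs huvw hpole

end Conic

theorem Z_fixed_by_TP_Kinv_general {A B C P P' Q D E F Z : Pt} {x y z : ℝ}
    (hABC : AffineIndependent ℝ ![A, B, C])
    (hsum : x + y + z = 1)
    (hPco : P = x • A + y • B + z • C)
    (hPG : P ≠ cent A B C)
    (hx0 : x ≠ 0) (hy0 : y ≠ 0) (hz0 : z ≠ 0)
    (hx1 : x ≠ 1) (hy1 : y ≠ 1) (hz1 : z ≠ 1)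
    (hst : x * y + y * z + z * x ≠ 0)
    (hP' : P' = (y * z / (x * y + y * z + z * x)) • A
        + (x * z / (x * y + y * z + z * x)) • B
        + (x * y / (x * y + y * z + z * x)) • C)
    (hQ : Q = homoth (cent A B C) (-(1 / 2)) P')
    (hD : Collinear ℝ {A, P, D} ∧ Collinear ℝ {B, C, D})
    (hE : Collinear ℝ {B, P, E} ∧ Collinear ℝ {A, C, E})
    (hF : Collinear ℝ {C, P, F} ∧ Collinear ℝ {A, B, F})
    {TP : Pt →ᵃ[ℝ] Pt} (hTA : TP A = D) (hTB : TP B = E) (hTC : TP C = F)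
    {CP : Set Pt} (hCP : IsConic CP) (hA : A ∈ CP) (hB : B ∈ CP) (hC : C ∈ CP)
    (hPCP : P ∈ CP) (hQCP : Q ∈ CP) (hZ : IsCenterOf Z CP) :
    TP (homoth (cent A B C) (-2) Z) = Z := by
  obtain ⟨c, hc, rfl⟩ := hCP
  obtain ⟨u, v, w, huvw, rfl⟩ := exists_eq_combination hABC Z
  subst hPco hP' hQ hTA hTB hTC
  rw [isotomcomplement_eq A B C rfl hst] at hQCP
  obtain ⟨hu, hv, hw⟩ := center_coords hABC hc hA hB hC hsum hx0 hy0 hz0 hx1 hy1 hz1 rfl hst hPCP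
    hQCP huvw rfl hZ
  have hs := pole_weight_ne_zero hx0 hy0 (hPG ∘ (combination_eq_cent_iff hABC hsum).2) hu hv
  obtain ⟨hD', hE', hF'⟩ := smul_traces_eq hABC hsum hD.1 hD.2 hE.1 hE.2 hF.1 hF.2
  have hK : homoth (cent A B C) (-2) (u • A + v • B + w • C) =
      (1 - 2 * u) • A + (1 - 2 * v) • B + (1 - 2 * w) • C := by
    rw [homoth_cent]
    module
  rw [hK, affineMap_apply_combination TP A B C (by linarith)]
  exact smul_right_injective _ hs (smul_traces_combination_eq_smul rfl hu hv hw hD' hE' hF')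

theorem Z_fixed_by_TP_Kinv
    (A B C P P' Q Q' D E F D₃ E₃ F₃ : Pt) (x y z : ℝ)
    (hABC : AffineIndependent ℝ ![A, B, C])
    (hsum : x + y + z = 1)
    (hPco : P = x • A + y • B + z • C)
    (hx0 : x ≠ 0) (hy0 : y ≠ 0) (hz0 : z ≠ 0)
    (hx1 : x ≠ 1) (hy1 : y ≠ 1) (hz1 : z ≠ 1)
    (hst : x * y + y * z + z * x ≠ 0)
    (hP' : P' = (y * z / (x * y + y * z + z * x)) • A
        + (x * z / (x * y + y * z + z * x)) • B
        + (x * y / (x * y + y * z + z * x)) • C)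
    (hQ : Q = homoth (cent A B C) (-(1 / 2)) P')
    (hQ' : Q' = homoth (cent A B C) (-(1 / 2)) P)
    (hD : Collinear ℝ {A, P, D} ∧ Collinear ℝ {B, C, D})
    (hE : Collinear ℝ {B, P, E} ∧ Collinear ℝ {A, C, E})
    (hF : Collinear ℝ {C, P, F} ∧ Collinear ℝ {A, B, F})
    (hD₃ : Collinear ℝ {A, P', D₃} ∧ Collinear ℝ {B, C, D₃})
    (hE₃ : Collinear ℝ {B, P', E₃} ∧ Collinear ℝ {A, C, E₃})
    (hF₃ : Collinear ℝ {C, P', F₃} ∧ Collinear ℝ {A, B, F₃})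
    (hxy : x ≠ y) (hyz : y ≠ z) (hxz : x ≠ z)
    (TP : Pt ≃ᵃ[ℝ] Pt) (hTP : TP A = D ∧ TP B = E ∧ TP C = F)
    (CP : Set Pt) (Z : Pt)
    (hCPc : IsConic CP) (hACP : A ∈ CP) (hBCP : B ∈ CP) (hCCP : C ∈ CP)
    (hPCP : P ∈ CP) (hQCP : Q ∈ CP)
    (hCPuniq : ∀ S : Set Pt, IsConic S → A ∈ S → B ∈ S → C ∈ S → P ∈ S → Q ∈ S → S = CP)
    (hZ : IsCenterOf Z CP) (hZuniq : ∀ W : Pt, IsCenterOf W CP → W = Z) :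
    TP (homoth (cent A B C) (-2) Z) = Z :=
  Z_fixed_by_TP_Kinv_general hABC hsum hPco
    (fun h => hxy ((combination_eq_cent_iff hABC hsum).1 (hPco ▸ h)).1) hx0 hy0 hz0 hx1 hy1 hz1 hst
    hP' hQ hD hE hF (TP := TP.toAffineMap) hTP.1 hTP.2.1 hTP.2.2 hCPc hACP hBCP hCCP hPCP hQCP hZ
end
end
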